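/- Under Assumption 1, if the weights satisfy (W1) and (W2) and m = m_n → ∞ with (m*)³/n_* → 0 as n → ∞, then: if p = 1, E[(σ̂²_n − σ²)²] → 0 as n → ∞ (L²-consistency), and if p > 1, E‖σ̂²_n − σ²‖_∞ → 0 as n → ∞ (L¹-consistency). -/

import Mathlib

/-!
The error `σ̂²_n - σ²` is split into the centred part `σ̂²_n - E σ̂²_n` and the bias `E σ̂²_n - σ²`.

Both parts rest on the `φ`-mixing covariance inequality
`|Cov(X, Y)| ≤ 2 φ^{1/2} ‖X‖₂ ‖Y‖₂` (`abs_cov_le`). For `X = 1_A` the functional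
`Y ↦ Cov(1_A, Y)` has the density `E[1_A | m₂] - P(A)`, whose `L¹`-norm is at most `2 φ P(A)`, and
Cauchy–Schwarz with respect to this density applies (`abs_setIntegral_sub_le`). A second application
of Cauchy–Schwarz over the values of `X` gives the case of simple `X`, and general `X` follow by
approximation.

For the centred part, the products `Z_i = ξ_i^{(ν)} ξ_{i+j}^{(μ)}` have finite second moments, and
`Z_0`, `Z_k` live on half-spaces at distance `|k_l| - |j_l|` in every direction `l` in which this
number is positive; hence `|Cov(Z_0, Z_k)|` is at most a constant times `φ(|k_l| - |j_l|)^{1/2}`.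
For lags `|j| ≤ m*` these bounds sum over `k` to `O((m*)^q)`: there are `O((m*)^q)` sites `k` for
which no direction separates the pairs, and `O((m* + r)^{q-1}) = O((m*)^{q-1} r^{q-1})` sites at
separation exactly `r` (`exists_sum_le`). So each `γ̂_n(j)` has variance `O((m*)^q / n_*^q)`, and
summing `O((m*)^q)` of them gives `E(σ̂²_n - E σ̂²_n)² = O(((m*)³ / n_*)^q)`
(`exists_variance_sigmaHat_le`).

The same lattice estimate with the lag `0` shows that the autocovariances are absolutely summable,
so the bias tends to `0` by dominated convergence (`tendsto_sum_lags`). This gives `L²`-consistency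
of each entry for every `p`; the `L¹`-statement for the maximum norm follows entry by entry.
-/

open MeasureTheory Filter Finset Topology

noncomputable section

variable {Ω : Type*}

/-- σ-algebra generated by the field at sites whose `j`-th coordinate is `≤ r`. -/
def sigmaLE {d : ℕ} {E : Type*} [MeasurableSpace Ω] [MeasurableSpace E]
    (ξ : (Fin d → ℤ) → Ω → E) (j : Fin d) (r : ℤ) : MeasurableSpace Ω :=
  ⨆ i ∈ {i : Fin d → ℤ | i j ≤ r}, MeasurableSpace.comap (ξ i) inferInstance

/-- σ-algebra generated by the field at sites whose `j`-th coordinate is `≥ r`. -/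
def sigmaGE {d : ℕ} {E : Type*} [MeasurableSpace Ω] [MeasurableSpace E]
    (ξ : (Fin d → ℤ) → Ω → E) (j : Fin d) (r : ℤ) : MeasurableSpace Ω :=
  ⨆ i ∈ {i : Fin d → ℤ | r ≤ i j}, MeasurableSpace.comap (ξ i) inferInstance

/-- φ-mixing coefficient in direction `j` at distance `r`. -/
def phiCoeff [MeasurableSpace Ω] {d : ℕ} {E : Type*} [MeasurableSpace E]
    (ξ : (Fin d → ℤ) → Ω → E) (P : Measure Ω) (j : Fin d) (r : ℤ) : ℝ :=
  sSup {x | ∃ A B : Set Ω, MeasurableSet[sigmaLE ξ j 0] A ∧ MeasurableSet[sigmaGE ξ j r] B ∧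
    P A ≠ 0 ∧ x = |(P (A ∩ B)).toReal / (P A).toReal - (P B).toReal|}

/-- The (half-space) φ-mixing coefficient `φ(r)`, with the convention `φ(r) = 1` for `r ≤ 0`. -/
def phiMix [MeasurableSpace Ω] {d : ℕ} {E : Type*} [MeasurableSpace E]
    (ξ : (Fin d → ℤ) → Ω → E) (P : Measure Ω) (r : ℤ) : ℝ :=
  if r ≤ 0 then 1 else ⨆ j : Fin d, phiCoeff ξ P j r

/-- Strict stationarity: all finite dimensional distributions are shift invariant. -/
def StrictStationary [MeasurableSpace Ω] {d : ℕ} {E : Type*} [MeasurableSpace E]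
    (ξ : (Fin d → ℤ) → Ω → E) (P : Measure Ω) : Prop :=
  ∀ t : Fin d → ℤ,
    Measure.map (fun ω => (fun i => ξ (i + t) ω)) P = Measure.map (fun ω => (fun i => ξ i ω)) P

/-- The index box `Γ_n = {1,…,n₁} × ⋯ × {1,…,n_d}`. -/
def box (d : ℕ) (n : Fin d → ℕ) : Finset (Fin d → ℤ) :=
  Finset.Icc 1 (fun i => (n i : ℤ))

/-- `Γ̃_n(j) = {i ∈ Γ_n : i + j ∈ Γ_n}`. -/
def boxJ (d : ℕ) (n : Fin d → ℕ) (j : Fin d → ℤ) : Finset (Fin d → ℤ) :=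
  (box d n).filter (fun i => i + j ∈ box d n)

/-- The lag window `{j : |j_i| ≤ m_i ∀ i}`. -/
def lags (d : ℕ) (m : Fin d → ℕ) : Finset (Fin d → ℤ) :=
  Finset.Icc (fun i => -(m i : ℤ)) (fun i => (m i : ℤ))

/-- Autocovariance matrix `γ(j) = E(ξ_0 ξ_jᵀ)`. -/
def acov [MeasurableSpace Ω] {d p : ℕ} (ξ : (Fin d → ℤ) → Ω → (Fin p → ℝ)) (P : Measure Ω)
    (j : Fin d → ℤ) : Fin p → Fin p → ℝ :=
  fun ν μ => ∫ ω, ξ 0 ω ν * ξ j ω μ ∂P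

/-- Sample autocovariance `γ̂_n(j)`. -/
def acovHat {d p : ℕ} (ξ : (Fin d → ℤ) → Ω → (Fin p → ℝ)) (n : Fin d → ℕ) (j : Fin d → ℤ)
    (ω : Ω) : Fin p → Fin p → ℝ :=
  fun ν μ => ((boxJ d n j).card : ℝ)⁻¹ * ∑ i ∈ boxJ d n j, ξ i ω ν * ξ (i + j) ω μ

/-- The estimator `σ̂²_n = ∑_{|j| ≤ m} w_m(j) γ̂_n(j)`. -/
def sigmaHat {d p : ℕ} (ξ : (Fin d → ℤ) → Ω → (Fin p → ℝ))
    (w : (Fin d → ℕ) → (Fin d → ℤ) → ℝ) (m n : Fin d → ℕ) (ω : Ω) : Fin p → Fin p → ℝ :=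
  ∑ j ∈ lags d m, w m j • acovHat ξ n j ω


set_option linter.unusedSectionVars false

/-! ### The covariance inequality for `φ`-mixing `σ`-algebras -/

theorem integral_mul_le_sqrt {Ω : Type*} [MeasurableSpace Ω] {P : Measure Ω} {f g : Ω → ℝ}
    (hf0 : ∀ ω, 0 ≤ f ω) (hg0 : ∀ ω, 0 ≤ g ω) (hf : MemLp f 2 P) (hg : MemLp g 2 P) :
    ∫ ω, f ω * g ω ∂P ≤ √(∫ ω, f ω ^ 2 ∂P) * √(∫ ω, g ω ^ 2 ∂P) := by
  have h := integral_mul_le_Lp_mul_Lq_of_nonneg (μ := P) (f := f) (g := g)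
    Real.HolderConjugate.two_two (ae_of_all _ hf0) (ae_of_all _ hg0) (by simpa using hf)
    (by simpa using hg)
  simpa [Real.sqrt_eq_rpow] using h

/-- If the event `A` is `φ`-mixing with respect to the `σ`-algebra `m₂`, then the signed functional
`Y ↦ E[Y 1_A] - P(A) E[Y]` obeys a weighted Cauchy–Schwarz bound on `L²(m₂)`. It is represented by
the density `D = E[1_A | m₂] - P(A)`, whose `L¹` norm is at most `2 φ P(A)`. -/
theorem abs_setIntegral_sub_le {Ω : Type*} {m₂ : MeasurableSpace Ω} [m0 : MeasurableSpace Ω]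
    {P : Measure Ω} [IsProbabilityMeasure P] (hm : m₂ ≤ m0) {A : Set Ω} (hA : MeasurableSet A)
    {φ : ℝ} (hφ : ∀ B, MeasurableSet[m₂] B →
      |P.real (A ∩ B) - P.real A * P.real B| ≤ φ * P.real A)
    {Y : Ω → ℝ} (hYm : Measurable[m₂] Y) (hY : MemLp Y 2 P) :
    |∫ ω in A, Y ω ∂P - P.real A * ∫ ω, Y ω ∂P| ≤
      √(2 * φ * P.real A) * √(∫ ω in A, Y ω ^ 2 ∂P + P.real A * ∫ ω, Y ω ^ 2 ∂P) := by
  set c : Ω → ℝ := P[A.indicator (fun _ => (1 : ℝ))|m₂] with hc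
  have hind : Integrable (A.indicator (fun _ => (1 : ℝ))) P :=
    (integrable_const 1).indicator hA
  have hcm : StronglyMeasurable[m₂] c := stronglyMeasurable_condExp
  have hc0 : 0 ≤ᵐ[P] c := condExp_nonneg (ae_of_all _ fun ω =>
    Set.indicator_nonneg (fun _ _ => zero_le_one) ω)
  -- pulling an `m₂`-measurable factor through the conditional expectation
  have key : ∀ g : Ω → ℝ, StronglyMeasurable[m₂] g → Integrable g P →
      Integrable (fun ω => g ω * c ω) P ∧ ∫ ω, g ω * c ω ∂P = ∫ ω in A, g ω ∂P := by
    intro g hg hgi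
    have e1 : (g * A.indicator (fun _ => (1 : ℝ))) = A.indicator g := by
      ext ω; by_cases h : ω ∈ A <;> simp [h]
    have h1 := condExp_mul_of_stronglyMeasurable_left (μ := P) hg
      (by rw [e1]; exact hgi.indicator hA) hind
    refine ⟨(integrable_condExp (m := m₂) (f := g * A.indicator (fun _ => (1 : ℝ)))).congr h1, ?_⟩
    have h2 : ∫ ω, g ω * c ω ∂P = ∫ ω, (P[g * A.indicator (fun _ => (1 : ℝ))|m₂]) ω ∂P :=
      integral_congr_ae h1.symm
    rw [h2, integral_condExp hm, e1, integral_indicator hA]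
  have hYi : Integrable Y P := hY.integrable (by norm_num)
  have hY2 : Integrable (fun ω => Y ω ^ 2) P := hY.integrable_sq
  obtain ⟨i1, k1⟩ := key Y hYm.stronglyMeasurable hYi
  obtain ⟨i2, k2⟩ := key _ (hYm.pow_const 2).stronglyMeasurable hY2
  set a := P.real A with ha
  set D : Ω → ℝ := fun ω => c ω - a with hD
  have hDm : Measurable[m₂] D := hcm.measurable.sub_const a
  have hY0 : Measurable Y := hYm.mono hm le_rfl
  have hD0 : Measurable D := hDm.mono hm le_rfl
  have hDi : Integrable D P := integrable_condExp.sub (integrable_const a)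
  have hDabs : ∀ᵐ ω ∂P, |D ω| ≤ c ω + a := by
    filter_upwards [hc0] with ω h
    have h' : 0 ≤ c ω := h
    have : 0 ≤ a := measureReal_nonneg
    rw [abs_le]; constructor <;> simp only [hD] <;> linarith
  -- `∫ |D| ≤ 2 φ P(A)`: split according to the sign of `D`
  have hDset : ∀ B, MeasurableSet[m₂] B →
      ∫ ω in B, D ω ∂P = P.real (A ∩ B) - a * P.real B := by
    intro B hB
    simp only [hD]
    rw [integral_sub integrable_condExp.integrableOn (integrable_const a).integrableOn,
      setIntegral_condExp hm hind hB, setIntegral_indicator hA]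
    simp [Set.inter_comm, mul_comm]
  have hL1 : ∫ ω, |D ω| ∂P ≤ 2 * φ * a := by
    have hB : MeasurableSet[m₂] {ω | 0 ≤ D ω} := hDm measurableSet_Ici
    have hBc := hB.compl
    rw [← integral_add_compl (hm _ hB) hDi.abs]
    have e1 : ∫ ω in {ω | 0 ≤ D ω}, |D ω| ∂P = ∫ ω in {ω | 0 ≤ D ω}, D ω ∂P :=
      setIntegral_congr_fun (hm _ hB) fun ω h => abs_of_nonneg h
    have e2 : ∫ ω in {ω | 0 ≤ D ω}ᶜ, |D ω| ∂P = - ∫ ω in {ω | 0 ≤ D ω}ᶜ, D ω ∂P := by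
      rw [← integral_neg]
      exact setIntegral_congr_fun (hm _ hBc) fun ω h => abs_of_neg (not_le.1 h)
    rw [e1, e2, hDset _ hB, hDset _ hBc]
    have := (abs_le.1 (hφ _ hB)).2
    have := (abs_le.1 (hφ _ hBc)).1
    linarith
  have hYD : ∫ ω, Y ω * D ω ∂P = ∫ ω in A, Y ω ∂P - a * ∫ ω, Y ω ∂P := by
    simp only [hD, mul_sub]
    rw [integral_sub i1 (hYi.mul_const a), k1, integral_mul_const, mul_comm]
  have hY2D : Integrable (fun ω => Y ω ^ 2 * |D ω|) P := by
    refine (i2.add (hY2.mul_const a)).mono'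
      ((hY0.pow_const 2).mul hD0.abs).aestronglyMeasurable ?_
    filter_upwards [hDabs] with ω h
    rw [Real.norm_of_nonneg (by positivity)]
    simp only [Pi.add_apply]
    nlinarith [sq_nonneg (Y ω)]
  have hY2Dle : ∫ ω, Y ω ^ 2 * |D ω| ∂P ≤ ∫ ω in A, Y ω ^ 2 ∂P + a * ∫ ω, Y ω ^ 2 ∂P := by
    rw [← k2, mul_comm a, ← integral_mul_const, ← integral_add i2 (hY2.mul_const a)]
    refine integral_mono_ae hY2D (i2.add (hY2.mul_const a)) ?_
    filter_upwards [hDabs] with ω h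
    nlinarith [sq_nonneg (Y ω)]
  have m1 : MemLp (fun ω => |Y ω| * √|D ω|) 2 P := by
    refine (memLp_two_iff_integrable_sq
      (hY0.abs.mul hD0.abs.sqrt).aestronglyMeasurable).2 ?_
    refine hY2D.congr (ae_of_all _ fun ω => ?_)
    simp [mul_pow, Real.sq_sqrt]
  have m2 : MemLp (fun ω => √|D ω|) 2 P := by
    refine (memLp_two_iff_integrable_sq
      hD0.abs.sqrt.aestronglyMeasurable).2 ?_
    refine hDi.abs.congr (ae_of_all _ fun ω => ?_)
    simp [Real.sq_sqrt]
  have cs := integral_mul_le_sqrt (fun ω => by positivity) (fun ω => by positivity) m1 m2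
  simp only [mul_pow, sq_abs, Real.sq_sqrt (abs_nonneg _)] at cs
  rw [← hYD]
  calc |∫ ω, Y ω * D ω ∂P| ≤ ∫ ω, |Y ω * D ω| ∂P := abs_integral_le_integral_abs
    _ = ∫ ω, |Y ω| * √|D ω| * √|D ω| ∂P := by
        congr 1; ext ω; rw [abs_mul, mul_assoc, Real.mul_self_sqrt (abs_nonneg _)]
    _ ≤ _ := cs
    _ ≤ _ := by rw [mul_comm]; gcongr

/-- The `φ`-mixing covariance inequality when `X` takes finitely many values. -/
theorem abs_cov_le_of_finite {Ω : Type*} {m₁ m₂ : MeasurableSpace Ω} [m0 : MeasurableSpace Ω]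
    {P : Measure Ω} [IsProbabilityMeasure P] (hm1 : m₁ ≤ m0) (hm2 : m₂ ≤ m0)
    {φ : ℝ} (hφ : ∀ A B, MeasurableSet[m₁] A → MeasurableSet[m₂] B →
      |P.real (A ∩ B) - P.real A * P.real B| ≤ φ * P.real A) (hφ0 : 0 ≤ φ)
    {X Y : Ω → ℝ} (hXm : Measurable[m₁] X) (s : Finset ℝ) (hs : ∀ ω, X ω ∈ s)
    (hX : MemLp X 2 P) (hYm : Measurable[m₂] Y) (hY : MemLp Y 2 P) :
    |∫ ω, X ω * Y ω ∂P - (∫ ω, X ω ∂P) * ∫ ω, Y ω ∂P| ≤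
      2 * √φ * √(∫ ω, X ω ^ 2 ∂P) * √(∫ ω, Y ω ^ 2 ∂P) := by
  set A : ℝ → Set Ω := fun a => X ⁻¹' {a} with hAdef
  have hA1 : ∀ a, MeasurableSet[m₁] (A a) := fun a => hXm (measurableSet_singleton a)
  have hA : ∀ a, MeasurableSet (A a) := fun a => hm1 _ (hA1 a)
  have part : ∀ g : Ω → ℝ, Integrable g P → ∫ ω, g ω ∂P = ∑ a ∈ s, ∫ ω in A a, g ω ∂P := by
    intro g hg
    rw [← integral_biUnion_finset s (fun a _ => hA a) ?_ (fun a _ => hg.integrableOn)]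
    · have : (⋃ a ∈ s, A a) = Set.univ := by
        ext ω; simpa [hAdef] using hs ω
      rw [this, setIntegral_univ]
    · intro a _ b _ hab
      exact Disjoint.preimage X (by simpa using hab)
  have eXY : ∫ ω, X ω * Y ω ∂P = ∑ a ∈ s, a * ∫ ω in A a, Y ω ∂P := by
    rw [part (fun ω => X ω * Y ω) (hX.integrable_mul hY)]
    refine Finset.sum_congr rfl fun a _ => ?_
    rw [← integral_const_mul]
    exact setIntegral_congr_fun (hA a) fun ω (h : X ω = a) => by simp only [h]
  have eX : ∫ ω, X ω ∂P = ∑ a ∈ s, a * P.real (A a) := by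
    rw [part _ (hX.integrable (by norm_num))]
    refine Finset.sum_congr rfl fun a _ => ?_
    rw [setIntegral_congr_fun (g := fun _ => a) (hA a) fun ω (h : X ω = a) => by simp only [h]]
    simp [mul_comm]
  have eX2 : ∫ ω, X ω ^ 2 ∂P = ∑ a ∈ s, a ^ 2 * P.real (A a) := by
    rw [part _ hX.integrable_sq]
    refine Finset.sum_congr rfl fun a _ => ?_
    rw [setIntegral_congr_fun (g := fun _ => a ^ 2) (hA a)
      fun ω (h : X ω = a) => by simp only [h]]
    simp [mul_comm]
  have e1 : ∑ a ∈ s, P.real (A a) = 1 := by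
    have := part (fun _ => 1) (integrable_const 1)
    simpa using this.symm
  have eY2 := part _ hY.integrable_sq
  set V := ∫ ω, Y ω ^ 2 ∂P with hV
  have hV0 : 0 ≤ V := integral_nonneg fun ω => sq_nonneg _
  rw [eXY, eX, Finset.sum_mul, ← Finset.sum_sub_distrib]
  calc |∑ a ∈ s, (a * ∫ ω in A a, Y ω ∂P - a * P.real (A a) * ∫ ω, Y ω ∂P)|
      ≤ ∑ a ∈ s, √(2 * φ) * (√(a ^ 2 * P.real (A a)) *
          √(∫ ω in A a, Y ω ^ 2 ∂P + P.real (A a) * V)) := by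
        refine (Finset.abs_sum_le_sum_abs _ _).trans (Finset.sum_le_sum fun a _ => ?_)
        rw [mul_assoc, ← mul_sub, abs_mul]
        refine (mul_le_mul_of_nonneg_left (abs_setIntegral_sub_le hm2 (hA a)
          (fun B hB => hφ _ B (hA1 a) hB) hYm hY) (abs_nonneg a)).trans_eq ?_
        rw [Real.sqrt_mul (by positivity) (P.real (A a)), Real.sqrt_mul (sq_nonneg a),
          Real.sqrt_sq_eq_abs]
        ring
    _ ≤ √(2 * φ) * (√(∑ a ∈ s, a ^ 2 * P.real (A a)) *
          √(∑ a ∈ s, (∫ ω in A a, Y ω ^ 2 ∂P + P.real (A a) * V))) := by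
        rw [← Finset.mul_sum]
        refine mul_le_mul_of_nonneg_left (Real.sum_sqrt_mul_sqrt_le s
          (fun a => by positivity) (fun a => ?_)) (by positivity)
        have : 0 ≤ ∫ ω in A a, Y ω ^ 2 ∂P := integral_nonneg fun ω => sq_nonneg _
        positivity
    _ = _ := by
        rw [Finset.sum_add_distrib, ← eY2, ← Finset.sum_mul, e1, ← eX2, one_mul,
          show V + V = 2 * V by ring, Real.sqrt_mul (by norm_num) φ,
          Real.sqrt_mul (by norm_num) V]
        have : √(2 : ℝ) * √2 = 2 := Real.mul_self_sqrt (by norm_num)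
        linear_combination (√φ * √(∫ ω, X ω ^ 2 ∂P) * √V) * this

/-- The `φ`-mixing covariance inequality `|Cov(X, Y)| ≤ 2 φ^{1/2} ‖X‖₂ ‖Y‖₂`. -/
theorem abs_cov_le {Ω : Type*} {m₁ m₂ : MeasurableSpace Ω} [m0 : MeasurableSpace Ω]
    {P : Measure Ω} [IsProbabilityMeasure P] (hm1 : m₁ ≤ m0) (hm2 : m₂ ≤ m0)
    {φ : ℝ} (hφ : ∀ A B, MeasurableSet[m₁] A → MeasurableSet[m₂] B →
      |P.real (A ∩ B) - P.real A * P.real B| ≤ φ * P.real A) (hφ0 : 0 ≤ φ)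
    {X Y : Ω → ℝ} (hXm : Measurable[m₁] X)
    (hX : MemLp X 2 P) (hYm : Measurable[m₂] Y) (hY : MemLp Y 2 P) :
    |∫ ω, X ω * Y ω ∂P - (∫ ω, X ω ∂P) * ∫ ω, Y ω ∂P| ≤
      2 * √φ * √(∫ ω, X ω ^ 2 ∂P) * √(∫ ω, Y ω ^ 2 ∂P) := by
  -- approximate `X` by `m₁`-simple functions dominated by `2 |X|`
  set S : ℕ → @SimpleFunc Ω m₁ ℝ := fun n =>
    @SimpleFunc.approxOn ℝ Ω _ _ _ m₁ X hXm Set.univ 0 (Set.mem_univ _) _ n with hS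
  have hSm : ∀ n, Measurable[m₁] (S n) := fun n => @SimpleFunc.measurable _ _ m₁ _ (S n)
  have hSle : ∀ n ω, |S n ω| ≤ 2 * |X ω| := by
    intro n ω
    have := @SimpleFunc.norm_approxOn_zero_le Ω ℝ m₁ _ _ _ X hXm Set.univ (Set.mem_univ _) _ ω n
    simp only [Real.norm_eq_abs] at this
    linarith
  have hSt : ∀ ω, Tendsto (fun n => S n ω) atTop (𝓝 (X ω)) := fun ω =>
    @SimpleFunc.tendsto_approxOn ℝ Ω _ _ _ m₁ X hXm Set.univ 0 (Set.mem_univ _) _ ω (by simp)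
  have hSa : ∀ n, AEStronglyMeasurable (S n) P := fun n =>
    ((hSm n).mono hm1 le_rfl).aestronglyMeasurable
  have hSL : ∀ n, MemLp (S n) 2 P := fun n =>
    MemLp.of_le_mul hX (hSa n) (ae_of_all _ fun ω => by simpa using hSle n ω)
  have hYa := hY.aestronglyMeasurable
  have t1 : Tendsto (fun n => ∫ ω, S n ω * Y ω ∂P) atTop (𝓝 (∫ ω, X ω * Y ω ∂P)) := by
    refine tendsto_integral_of_dominated_convergence (fun ω => 2 * |X ω * Y ω|)
      (fun n => (hSa n).mul hYa) ((hX.integrable_mul hY).abs.const_mul 2)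
      (fun n => ae_of_all _ fun ω => ?_) (ae_of_all _ fun ω => (hSt ω).mul_const _)
    rw [Real.norm_eq_abs, abs_mul, abs_mul, ← mul_assoc]
    exact mul_le_mul_of_nonneg_right (hSle n ω) (abs_nonneg _)
  have t2 : Tendsto (fun n => ∫ ω, S n ω ∂P) atTop (𝓝 (∫ ω, X ω ∂P)) :=
    tendsto_integral_of_dominated_convergence (fun ω => 2 * |X ω|) hSa
      ((hX.integrable (by norm_num)).abs.const_mul 2)
      (fun n => ae_of_all _ fun ω => hSle n ω) (ae_of_all _ hSt)
  have t3 : Tendsto (fun n => ∫ ω, S n ω ^ 2 ∂P) atTop (𝓝 (∫ ω, X ω ^ 2 ∂P)) := by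
    refine tendsto_integral_of_dominated_convergence (fun ω => 4 * X ω ^ 2)
      (fun n => (hSa n).pow 2) (hX.integrable_sq.const_mul 4)
      (fun n => ae_of_all _ fun ω => ?_) (ae_of_all _ fun ω => (hSt ω).pow 2)
    rw [Real.norm_of_nonneg (sq_nonneg _), ← sq_abs, ← sq_abs (X ω)]
    nlinarith [hSle n ω, abs_nonneg (S n ω), abs_nonneg (X ω)]
  refine le_of_tendsto_of_tendsto' (t1.sub (t2.mul_const _)).abs
    ((t3.sqrt.const_mul (2 * √φ)).mul_const _) fun n => ?_
  exact abs_cov_le_of_finite hm1 hm2 hφ hφ0 (hSm n) (@SimpleFunc.range _ _ m₁ (S n))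
    (fun ω => @SimpleFunc.mem_range_self _ _ m₁ (S n) ω) (hSL n) hYm hY

/-! ### Counting lattice sites by their distance to a box -/

/-- Sites `k` with `|k_l| = b` and all other coordinates bounded by `N`. -/
def slab {q : ℕ} (l : Fin q) (b N : ℕ) : Finset (Fin q → ℤ) :=
  Fintype.piFinset fun l' => if l' = l then {(b : ℤ), -(b : ℤ)} else Finset.Icc (-(N : ℤ)) N

theorem card_slab_le {q : ℕ} (l : Fin q) (b N : ℕ) :
    ((slab l b N).card : ℝ) ≤ 2 * (2 * N + 1) ^ (q - 1) := by
  have h : (slab l b N).card ≤ 2 * (2 * N + 1) ^ (q - 1) := by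
    rw [slab, Fintype.card_piFinset, ← Finset.mul_prod_erase univ _ (mem_univ l)]
    refine Nat.mul_le_mul (by simpa using Finset.card_le_two) (le_of_eq ?_)
    rw [Finset.prod_congr rfl (g := fun _ => 2 * N + 1)]
    · simp
    · intro l' hl'
      rw [if_neg (Finset.ne_of_mem_erase hl'), Int.card_Icc]
      omega
  exact_mod_cast h

/-- Lattice sums of functions which decay like `g` in the distance to the box `∏ [-a_l, a_l]`:
such a sum is of the order `M ^ q` of the volume of the box. The number of sites at distance exactly
`r ≥ 1` is of order `(M + r) ^ (q - 1)`, hence at most a multiple of `M ^ (q - 1) * r ^ (q - 1)`. -/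
theorem exists_sum_le {q : ℕ} [Nonempty (Fin q)] {g : ℕ → ℝ} (hg0 : ∀ r, 0 ≤ g r)
    (hg : Summable fun r : ℕ => (r : ℝ) ^ (q - 1) * g r) :
    ∃ C : ℝ, 0 ≤ C ∧ ∀ M : ℕ, 1 ≤ M → ∀ a : Fin q → ℕ, (∀ l, a l ≤ M) → ∀ B : ℝ, 0 ≤ B →
      ∀ h : (Fin q → ℤ) → ℝ, (∀ k, h k ≤ B) →
      (∀ k l, ∀ r : ℕ, 1 ≤ r → |k l| = (a l : ℤ) + r → h k ≤ B * g r) →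
      ∀ F : Finset (Fin q → ℤ), ∑ k ∈ F, h k ≤ B * (C * (M : ℝ) ^ q) := by
  set S := ∑' r : ℕ, (r : ℝ) ^ (q - 1) * g r with hS
  have hterm : ∀ r : ℕ, 0 ≤ (r : ℝ) ^ (q - 1) * g r := fun r => mul_nonneg (by positivity) (hg0 r)
  have hS0 : 0 ≤ S := tsum_nonneg hterm
  refine ⟨3 ^ q + q * (2 * 5 ^ (q - 1) * S), by positivity, ?_⟩
  intro M hM a ha B hB h hhB hdec F
  have hM' : (1 : ℝ) ≤ M := by exact_mod_cast hM
  set Q : Finset (Fin q → ℤ) := Finset.Icc (fun _ => -(M : ℤ)) (fun _ => (M : ℤ)) with hQ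
  set R : ℕ := F.sup fun k => univ.sup fun l => (k l).natAbs with hR
  have hRle : ∀ k ∈ F, ∀ l, (k l).natAbs ≤ R := fun k hk l =>
    (Finset.le_sup (f := fun l => (k l).natAbs) (mem_univ l)).trans
      (Finset.le_sup (f := fun k : Fin q → ℤ => univ.sup fun l => (k l).natAbs) hk)
  let T : Fin q → ℕ → Finset (Fin q → ℤ) := fun l r => slab l (a l + r) (M + r)
  have pt : ∀ k ∈ F, h k ≤ B * ((if k ∈ Q then 1 else 0) +
      ∑ l, ∑ r ∈ Finset.Icc 1 R, g r * (if k ∈ T l r then 1 else 0)) := by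
    intro k hk
    have hn : ∀ l, ∀ r, 0 ≤ g r * (if k ∈ T l r then (1 : ℝ) else 0) := fun l r =>
      mul_nonneg (hg0 r) (by split_ifs <;> norm_num)
    have hnn : 0 ≤ ∑ l, ∑ r ∈ Finset.Icc 1 R, g r * (if k ∈ T l r then (1 : ℝ) else 0) :=
      Finset.sum_nonneg fun l _ => Finset.sum_nonneg fun r _ => hn l r
    -- the direction in which the distance to the box is attained
    obtain ⟨l, -, hl⟩ := Finset.exists_max_image univ (fun l => |k l| - (a l : ℤ)) univ_nonempty
    by_cases hle : |k l| - (a l : ℤ) ≤ 0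
    · have hkQ : k ∈ Q := by
        rw [hQ, Finset.mem_Icc]
        constructor <;> intro l' <;> have h1 := hl l' (mem_univ _) <;> have h2 := ha l' <;>
          have h3 := abs_le.1 (show |k l'| ≤ (M : ℤ) by omega)
        · exact h3.1
        · exact h3.2
      rw [if_pos hkQ]
      exact (hhB k).trans (le_mul_of_one_le_right hB (by linarith))
    · obtain ⟨r, hr⟩ : ∃ r : ℕ, |k l| = (a l : ℤ) + r := ⟨(|k l| - a l).toNat, by omega⟩
      have hr1 : 1 ≤ r := by omega
      have hrR : r ≤ R := by
        have h6 := hRle k hk l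
        rcases abs_choice (k l) with h5 | h5 <;> omega
      have hkT : k ∈ T l r := by
        refine Fintype.mem_piFinset.2 ?_
        intro l'
        by_cases hll : l' = l
        · subst hll
          rw [if_pos rfl, Finset.mem_insert, Finset.mem_singleton]
          push_cast
          rcases abs_choice (k l') with h5 | h5 <;> omega
        · rw [if_neg hll, Finset.mem_Icc]
          have h1 := hl l' (mem_univ _)
          have h2 := ha l'
          have h3 := abs_le.1 (show |k l'| ≤ (M + r : ℤ) by omega)
          push_cast
          exact h3
      refine (hdec k l r hr1 hr).trans (mul_le_mul_of_nonneg_left ?_ hB)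
      have h1 : g r ≤ ∑ r ∈ Finset.Icc 1 R, g r * (if k ∈ T l r then (1 : ℝ) else 0) := by
        have := Finset.single_le_sum (f := fun r => g r * (if k ∈ T l r then (1 : ℝ) else 0))
          (fun r _ => hn l r) (Finset.mem_Icc.2 ⟨hr1, hrR⟩)
        simpa [hkT] using this
      have h2 := Finset.single_le_sum
        (f := fun l => ∑ r ∈ Finset.Icc 1 R, g r * (if k ∈ T l r then (1 : ℝ) else 0))
        (fun l _ => Finset.sum_nonneg fun r _ => hn l r) (mem_univ l)
      have h3 : (0 : ℝ) ≤ if k ∈ Q then 1 else 0 := by split_ifs <;> norm_num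
      linarith
  have cnt : ∀ U : Finset (Fin q → ℤ), ∑ k ∈ F, (if k ∈ U then (1 : ℝ) else 0) ≤ U.card := by
    intro U
    rw [Finset.sum_ite_mem]
    simp only [sum_const, nsmul_eq_mul, mul_one]
    exact_mod_cast Finset.card_le_card Finset.inter_subset_right
  have hQc : (Q.card : ℝ) ≤ 3 ^ q * (M : ℝ) ^ q := by
    rw [hQ, Pi.card_Icc]
    simp only [Int.card_Icc, prod_const, card_univ, Fintype.card_fin]
    rw [show ((M : ℤ) + 1 - -(M : ℤ)).toNat = 2 * M + 1 by omega]
    push_cast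
    rw [← mul_pow]
    gcongr
    linarith
  have hTc : ∀ l, ∀ r ∈ Finset.Icc 1 R, g r * ∑ k ∈ F, (if k ∈ T l r then (1 : ℝ) else 0) ≤
      2 * 5 ^ (q - 1) * (M : ℝ) ^ q * ((r : ℝ) ^ (q - 1) * g r) := by
    intro l r hr
    have hr1 : (1 : ℝ) ≤ r := by exact_mod_cast (Finset.mem_Icc.1 hr).1
    have h1 := (cnt (T l r)).trans (card_slab_le l (a l + r) (M + r))
    have h2 : (2 * ((M + r : ℕ) : ℝ) + 1) ≤ 5 * M * r := by
      push_cast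
      nlinarith [mul_nonneg (sub_nonneg.2 hM') (sub_nonneg.2 hr1)]
    have h3 : (2 * ((M + r : ℕ) : ℝ) + 1) ^ (q - 1) ≤ 5 ^ (q - 1) * (M : ℝ) ^ q * r ^ (q - 1) := by
      calc _ ≤ (5 * (M : ℝ) * r) ^ (q - 1) := by gcongr
        _ = 5 ^ (q - 1) * (M : ℝ) ^ (q - 1) * r ^ (q - 1) := by rw [mul_pow, mul_pow]
        _ ≤ _ := by gcongr; exact Nat.sub_le _ _
    calc _ ≤ g r * (2 * (5 ^ (q - 1) * (M : ℝ) ^ q * r ^ (q - 1))) :=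
          mul_le_mul_of_nonneg_left (by linarith) (hg0 r)
      _ = _ := by ring
  have hSle : ∑ r ∈ Finset.Icc 1 R, (r : ℝ) ^ (q - 1) * g r ≤ S :=
    hg.sum_le_tsum _ fun r _ => hterm r
  calc ∑ k ∈ F, h k ≤ _ := Finset.sum_le_sum pt
    _ = B * (∑ k ∈ F, (if k ∈ Q then 1 else 0) +
        ∑ l, ∑ r ∈ Finset.Icc 1 R, g r * ∑ k ∈ F, (if k ∈ T l r then 1 else 0)) := by
      rw [← Finset.mul_sum, Finset.sum_add_distrib, Finset.sum_comm]
      congr 2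
      refine Finset.sum_congr rfl fun l _ => ?_
      rw [Finset.sum_comm]
      exact Finset.sum_congr rfl fun r _ => (Finset.mul_sum _ _ _).symm
    _ ≤ B * (3 ^ q * (M : ℝ) ^ q + ∑ _l : Fin q, 2 * 5 ^ (q - 1) * (M : ℝ) ^ q * S) := by
      refine mul_le_mul_of_nonneg_left (add_le_add ((cnt Q).trans hQc)
        (Finset.sum_le_sum fun l _ => (Finset.sum_le_sum (hTc l)).trans ?_)) hB
      rw [← Finset.mul_sum]
      exact mul_le_mul_of_nonneg_left hSle (by positivity)
    _ = _ := by
      simp only [sum_const, card_univ, Fintype.card_fin, nsmul_eq_mul]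
      ring

/-! ### Moments and covariances of the random field -/

section Field

variable [MeasurableSpace Ω] {q p : ℕ} {P : Measure Ω} [IsProbabilityMeasure P]
  {ξ : (Fin q → ℤ) → Ω → (Fin p → ℝ)}

theorem sigmaLE_le (hmeas : ∀ i, Measurable (ξ i)) (l : Fin q) (r : ℤ) :
    sigmaLE ξ l r ≤ ‹MeasurableSpace Ω› :=
  iSup₂_le fun i _ => (hmeas i).comap_le

theorem sigmaGE_le (hmeas : ∀ i, Measurable (ξ i)) (l : Fin q) (r : ℤ) :
    sigmaGE ξ l r ≤ ‹MeasurableSpace Ω› :=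
  iSup₂_le fun i _ => (hmeas i).comap_le

theorem measurable_sigmaLE {l : Fin q} {r : ℤ} {i : Fin q → ℤ} (h : i l ≤ r) (k : Fin p) :
    Measurable[sigmaLE ξ l r] fun ω => ξ i ω k :=
  (measurable_pi_apply k).comp (measurable_iff_comap_le.2
    (le_iSup₂ (f := fun (i : Fin q → ℤ) (_ : i ∈ {i : Fin q → ℤ | i l ≤ r}) =>
      MeasurableSpace.comap (ξ i) inferInstance) i h))

theorem measurable_sigmaGE {l : Fin q} {r : ℤ} {i : Fin q → ℤ} (h : r ≤ i l) (k : Fin p) :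
    Measurable[sigmaGE ξ l r] fun ω => ξ i ω k :=
  (measurable_pi_apply k).comp (measurable_iff_comap_le.2
    (le_iSup₂ (f := fun (i : Fin q → ℤ) (_ : i ∈ {i : Fin q → ℤ | r ≤ i l}) =>
      MeasurableSpace.comap (ξ i) inferInstance) i h))

theorem phiMix_nonneg (r : ℤ) : 0 ≤ phiMix ξ P r := by
  unfold phiMix
  split_ifs
  · norm_num
  · refine Real.iSup_nonneg fun j => Real.sSup_nonneg ?_
    rintro x ⟨A, B, -, -, -, rfl⟩
    exact abs_nonneg _

/-- The defining inequality of the mixing coefficient. The set whose supremum is `phiCoeff` is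
bounded by `1`, so the supremum is not a junk value. -/
theorem abs_measureReal_inter_sub_le {l : Fin q} {r : ℕ} (hr : 1 ≤ r) {A B : Set Ω}
    (hA : MeasurableSet[sigmaLE ξ l 0] A) (hB : MeasurableSet[sigmaGE ξ l r] B) :
    |P.real (A ∩ B) - P.real A * P.real B| ≤ phiMix ξ P r * P.real A := by
  by_cases h0 : P A = 0
  · have h1 : P.real A = 0 := by simp [measureReal_def, h0]
    have h2 : P.real (A ∩ B) = 0 := by
      simp [measureReal_def, measure_mono_null Set.inter_subset_left h0]
    simp [h1, h2]
  have hpos : 0 < P.real A := ENNReal.toReal_pos h0 (measure_ne_top _ _)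
  have hle : |P.real (A ∩ B) / P.real A - P.real B| ≤ phiCoeff ξ P l r := by
    refine le_csSup ⟨1, ?_⟩ ⟨A, B, hA, hB, h0, rfl⟩
    rintro x ⟨A', B', -, -, -, rfl⟩
    refine abs_sub_le_iff.2 ⟨?_, ?_⟩
    · have : (P (A' ∩ B')).toReal / (P A').toReal ≤ 1 :=
        div_le_one_of_le₀ (measureReal_mono Set.inter_subset_left) ENNReal.toReal_nonneg
      have : 0 ≤ (P B').toReal := ENNReal.toReal_nonneg
      linarith
    · have : 0 ≤ (P (A' ∩ B')).toReal / (P A').toReal :=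
        div_nonneg ENNReal.toReal_nonneg ENNReal.toReal_nonneg
      have : (P B').toReal ≤ 1 := measureReal_le_one
      linarith
  have hle2 : phiCoeff ξ P l r ≤ phiMix ξ P r := by
    rw [phiMix, if_neg (by omega)]
    exact le_ciSup (f := fun j => phiCoeff ξ P j r) (Set.finite_range _).bddAbove l
  have e : P.real (A ∩ B) - P.real A * P.real B =
      (P.real (A ∩ B) / P.real A - P.real B) * P.real A := by
    field_simp
  rw [e, abs_mul, abs_of_pos hpos]
  exact mul_le_mul_of_nonneg_right (hle.trans hle2) hpos.le

/-- The covariance inequality for the field: past and future half-spaces at distance `r`. -/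
theorem abs_cov_le_phiMix (hmeas : ∀ i, Measurable (ξ i)) {l : Fin q} {r : ℕ} (hr : 1 ≤ r)
    {X Y : Ω → ℝ} (hXm : Measurable[sigmaLE ξ l 0] X) (hYm : Measurable[sigmaGE ξ l r] Y)
    (hX : MemLp X 2 P) (hY : MemLp Y 2 P) {K : ℝ} (hXK : ∫ ω, X ω ^ 2 ∂P ≤ K)
    (hYK : ∫ ω, Y ω ^ 2 ∂P ≤ K) :
    |∫ ω, X ω * Y ω ∂P - (∫ ω, X ω ∂P) * ∫ ω, Y ω ∂P| ≤ 2 * K * √(phiMix ξ P r) := by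
  have h := abs_cov_le (P := P) (sigmaLE_le hmeas l 0) (sigmaGE_le hmeas l r)
    (fun A B hA hB => abs_measureReal_inter_sub_le hr hA hB) (phiMix_nonneg _) hXm hX hYm hY
  have hK : 0 ≤ K := (integral_nonneg fun ω => sq_nonneg _).trans hXK
  calc _ ≤ _ := h
    _ ≤ 2 * √(phiMix ξ P r) * √K * √K := by gcongr
    _ = _ := by rw [mul_assoc, Real.mul_self_sqrt hK]; ring

theorem integral_shift (hmeas : ∀ i, Measurable (ξ i)) (hstat : StrictStationary ξ P)
    {F : ((Fin q → ℤ) → Fin p → ℝ) → ℝ} (hF : Measurable F) (t : Fin q → ℤ) :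
    ∫ ω, F (fun i => ξ (i + t) ω) ∂P = ∫ ω, F (fun i => ξ i ω) ∂P := by
  have m1 : Measurable fun ω => (fun i => ξ (i + t) ω) := measurable_pi_lambda _ fun i => hmeas _
  have m2 : Measurable fun ω => (fun i => ξ i ω) := measurable_pi_lambda _ fun i => hmeas _
  rw [← integral_map m1.aemeasurable hF.aestronglyMeasurable, hstat t,
    integral_map m2.aemeasurable hF.aestronglyMeasurable]

theorem integrable_shift (hmeas : ∀ i, Measurable (ξ i)) (hstat : StrictStationary ξ P)
    {F : ((Fin q → ℤ) → Fin p → ℝ) → ℝ} (hF : Measurable F) (t : Fin q → ℤ)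
    (h : Integrable (fun ω => F (fun i => ξ i ω)) P) :
    Integrable (fun ω => F (fun i => ξ (i + t) ω)) P := by
  have m1 : Measurable fun ω => (fun i => ξ (i + t) ω) := measurable_pi_lambda _ fun i => hmeas _
  have m2 : Measurable fun ω => (fun i => ξ i ω) := measurable_pi_lambda _ fun i => hmeas _
  have h2 := (integrable_map_measure hF.aestronglyMeasurable m2.aemeasurable).2 h
  rw [← hstat t] at h2
  exact (integrable_map_measure hF.aestronglyMeasurable m1.aemeasurable).1 h2

theorem integrable_pow_four (hmeas : ∀ i, Measurable (ξ i)) (hstat : StrictStationary ξ P)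
    (hmom : ∀ k, Integrable (fun ω => (ξ 0 ω k) ^ 4) P) (i : Fin q → ℤ) (k : Fin p) :
    Integrable (fun ω => ξ i ω k ^ 4) P := by
  simpa using integrable_shift hmeas hstat (F := fun x => x 0 k ^ 4) (by fun_prop) i (hmom k)

theorem memLp_apply (hmeas : ∀ i, Measurable (ξ i)) (hstat : StrictStationary ξ P)
    (hmom : ∀ k, Integrable (fun ω => (ξ 0 ω k) ^ 4) P) (i : Fin q → ℤ) (k : Fin p) :
    MemLp (fun ω => ξ i ω k) 2 P := by
  have hm : Measurable fun ω => ξ i ω k := (measurable_pi_apply k).comp (hmeas i)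
  refine (memLp_two_iff_integrable_sq hm.aestronglyMeasurable).2 ?_
  refine ((integrable_const 1).add (integrable_pow_four hmeas hstat hmom i k)).mono'
    (hm.pow_const 2).aestronglyMeasurable (ae_of_all _ fun ω => ?_)
  rw [Real.norm_of_nonneg (sq_nonneg _)]
  simp only [Pi.add_apply]
  nlinarith [sq_nonneg (ξ i ω k ^ 2 - 1)]

theorem integral_sq_apply_le (hmeas : ∀ i, Measurable (ξ i)) (hstat : StrictStationary ξ P)
    (i : Fin q → ℤ) (k : Fin p) :
    ∫ ω, ξ i ω k ^ 2 ∂P ≤ ∑ k, ∫ ω, ξ 0 ω k ^ 2 ∂P := by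
  have h := integral_shift hmeas hstat (F := fun x => x 0 k ^ 2) (by fun_prop) i
  simp only [zero_add] at h
  rw [h]
  exact Finset.single_le_sum (f := fun k => ∫ ω, ξ 0 ω k ^ 2 ∂P)
    (fun k _ => integral_nonneg fun ω => sq_nonneg _) (mem_univ k)

/-- The field of lagged products `ξ_i^{(ν)} ξ_{i+j}^{(μ)}` whose averages are the sample
autocovariances at lag `j`. -/
def lagProd (ξ : (Fin q → ℤ) → Ω → (Fin p → ℝ)) (j : Fin q → ℤ) (ν μ : Fin p)
    (i : Fin q → ℤ) (ω : Ω) : ℝ :=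
  ξ i ω ν * ξ (i + j) ω μ

theorem memLp_lagProd (hmeas : ∀ i, Measurable (ξ i)) (hstat : StrictStationary ξ P)
    (hmom : ∀ k, Integrable (fun ω => (ξ 0 ω k) ^ 4) P) (j : Fin q → ℤ) (ν μ : Fin p)
    (i : Fin q → ℤ) :
    MemLp (lagProd ξ j ν μ i) 2 P ∧
      ∫ ω, lagProd ξ j ν μ i ω ^ 2 ∂P ≤ ∑ k, ∫ ω, ξ 0 ω k ^ 4 ∂P := by
  have hm : ∀ i k, Measurable fun ω => ξ i ω k := fun i k => (measurable_pi_apply k).comp (hmeas i)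
  have h1 := integrable_pow_four hmeas hstat hmom i ν
  have h2 := integrable_pow_four hmeas hstat hmom (i + j) μ
  have hZm : Measurable (lagProd ξ j ν μ i) := (hm i ν).mul (hm (i + j) μ)
  have hle : ∀ ω, lagProd ξ j ν μ i ω ^ 2 ≤ 1 / 2 * ξ i ω ν ^ 4 + 1 / 2 * ξ (i + j) ω μ ^ 4 :=
    fun ω => by
      simp only [lagProd, mul_pow]
      nlinarith [sq_nonneg (ξ i ω ν ^ 2 - ξ (i + j) ω μ ^ 2)]
  have hint : Integrable (fun ω => 1 / 2 * ξ i ω ν ^ 4 + 1 / 2 * ξ (i + j) ω μ ^ 4) P :=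
    (h1.const_mul _).add (h2.const_mul _)
  have hL : MemLp (lagProd ξ j ν μ i) 2 P := by
    refine (memLp_two_iff_integrable_sq hZm.aestronglyMeasurable).2
      (hint.mono' (hZm.pow_const 2).aestronglyMeasurable (ae_of_all _ fun ω => ?_))
    rw [Real.norm_of_nonneg (sq_nonneg _)]
    exact hle ω
  refine ⟨hL, (integral_mono hL.integrable_sq hint hle).trans ?_⟩
  rw [integral_add (h1.const_mul _) (h2.const_mul _), integral_const_mul, integral_const_mul]
  have e : ∀ i k, ∫ ω, ξ i ω k ^ 4 ∂P ≤ ∑ k, ∫ ω, ξ 0 ω k ^ 4 ∂P := by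
    intro i k
    have h := integral_shift hmeas hstat (F := fun x => x 0 k ^ 4) (by fun_prop) i
    simp only [zero_add] at h
    rw [h]
    exact Finset.single_le_sum (f := fun k => ∫ ω, ξ 0 ω k ^ 4 ∂P)
      (fun k _ => integral_nonneg fun ω => by positivity) (mem_univ k)
  linarith [e i ν, e (i + j) μ]

theorem integral_lagProd (hmeas : ∀ i, Measurable (ξ i)) (hstat : StrictStationary ξ P)
    (j : Fin q → ℤ) (ν μ : Fin p) (i : Fin q → ℤ) :
    ∫ ω, lagProd ξ j ν μ i ω ∂P = acov ξ P j ν μ := by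
  have h := integral_shift hmeas hstat (F := fun x => x 0 ν * x j μ) (by fun_prop) i
  simp only [zero_add] at h
  simp only [lagProd, acov, ← h, add_comm]

theorem integral_lagProd_mul (hmeas : ∀ i, Measurable (ξ i)) (hstat : StrictStationary ξ P)
    (j : Fin q → ℤ) (ν μ : Fin p) (i i' t : Fin q → ℤ) :
    ∫ ω, lagProd ξ j ν μ (i + t) ω * lagProd ξ j ν μ (i' + t) ω ∂P =
      ∫ ω, lagProd ξ j ν μ i ω * lagProd ξ j ν μ i' ω ∂P := by
  have h := integral_shift hmeas hstat
    (F := fun x => (x i ν * x (i + j) μ) * (x i' ν * x (i' + j) μ)) (by fun_prop) t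
  simp only [lagProd, ← h, add_right_comm]

theorem abs_integral_mul_le {X Y : Ω → ℝ} (hX : MemLp X 2 P) (hY : MemLp Y 2 P) {K : ℝ}
    (hXK : ∫ ω, X ω ^ 2 ∂P ≤ K) (hYK : ∫ ω, Y ω ^ 2 ∂P ≤ K) :
    |∫ ω, X ω * Y ω ∂P| ≤ K := by
  have hK : 0 ≤ K := (integral_nonneg fun ω => sq_nonneg _).trans hXK
  have h := integral_mul_le_sqrt (P := P) (fun ω => abs_nonneg (X ω)) (fun ω => abs_nonneg (Y ω))
    hX.abs hY.abs
  simp only [sq_abs, ← abs_mul] at h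
  calc _ ≤ ∫ ω, |X ω * Y ω| ∂P := abs_integral_le_integral_abs
    _ ≤ _ := h
    _ ≤ √K * √K := by gcongr
    _ = K := Real.mul_self_sqrt hK

/-- Decay of the autocovariances. -/
theorem abs_acov_le (hmeas : ∀ i, Measurable (ξ i)) (hstat : StrictStationary ξ P)
    (hmom : ∀ k, Integrable (fun ω => (ξ 0 ω k) ^ 4) P) (hmean : ∀ k, ∫ ω, ξ 0 ω k ∂P = 0)
    (k : Fin q → ℤ) (ν μ : Fin p) {l : Fin q} {r : ℕ} (hr : 1 ≤ r) (hk : |k l| = r) :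
    |acov ξ P k ν μ| ≤ 2 * (∑ k, ∫ ω, ξ 0 ω k ^ 2 ∂P) * √(phiMix ξ P r) := by
  have hL := memLp_apply hmeas hstat hmom
  have hV := integral_sq_apply_le (P := P) hmeas hstat
  have pos : ∀ (k : Fin q → ℤ) (ν μ : Fin p), k l = r →
      |acov ξ P k ν μ| ≤ 2 * (∑ k, ∫ ω, ξ 0 ω k ^ 2 ∂P) * √(phiMix ξ P r) := by
    intro k ν μ hk
    have h := abs_cov_le_phiMix (P := P) hmeas hr
      (measurable_sigmaLE (ξ := ξ) (l := l) (r := 0) (i := 0) le_rfl ν)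
      (measurable_sigmaGE (ξ := ξ) (i := k) hk.ge μ) (hL 0 ν) (hL k μ) (hV 0 ν) (hV k μ)
    rwa [hmean, zero_mul, sub_zero] at h
  rcases abs_choice (k l) with h | h
  · exact pos k ν μ (by omega)
  · have e : acov ξ P k ν μ = acov ξ P (-k) μ ν := by
      have h := integral_shift hmeas hstat (F := fun x => x 0 ν * x k μ) (by fun_prop) (-k)
      simp only [zero_add, add_neg_cancel] at h
      simp only [acov, ← h]
      exact integral_congr_ae (ae_of_all _ fun ω => mul_comm _ _)
    rw [e]
    exact pos (-k) μ ν (by simp only [Pi.neg_apply]; omega)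

/-- Decay of the covariances of the lagged products: the pairs `{0, j}` and `{k, k + j}` lie in
half-spaces at distance `|k_l| - |j_l|` in direction `l`. -/
theorem abs_cov_lagProd_le (hmeas : ∀ i, Measurable (ξ i)) (hstat : StrictStationary ξ P)
    (hmom : ∀ k, Integrable (fun ω => (ξ 0 ω k) ^ 4) P)
    (j k : Fin q → ℤ) (ν μ : Fin p) {l : Fin q} {r : ℕ} (hr : 1 ≤ r) (hk : |k l| = |j l| + r) :
    |∫ ω, lagProd ξ j ν μ 0 ω * lagProd ξ j ν μ k ω ∂P - acov ξ P j ν μ ^ 2| ≤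
      2 * (∑ k, ∫ ω, ξ 0 ω k ^ 4 ∂P) * √(phiMix ξ P r) := by
  have hL := memLp_lagProd (P := P) hmeas hstat hmom j ν μ
  have pos : ∀ k : Fin q → ℤ, k l = |j l| + r →
      |∫ ω, lagProd ξ j ν μ 0 ω * lagProd ξ j ν μ k ω ∂P - acov ξ P j ν μ ^ 2| ≤
      2 * (∑ k, ∫ ω, ξ 0 ω k ^ 4 ∂P) * √(phiMix ξ P r) := by
    intro k hk
    -- shift so that the larger `l`-coordinate of the pair `{t, t + j}` becomes `0`
    set t : Fin q → ℤ := Function.update 0 l (-(max 0 (j l))) with ht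
    have htl : t l = -(max 0 (j l)) := by simp [ht]
    have ha1 := le_abs_self (j l)
    have ha2 := neg_le_abs (j l)
    have hX : Measurable[sigmaLE ξ l 0] (lagProd ξ j ν μ t) :=
      (measurable_sigmaLE (by rw [htl]; omega) ν).mul
        (measurable_sigmaLE (by rw [Pi.add_apply, htl]; omega) μ)
    have hY : Measurable[sigmaGE ξ l r] (lagProd ξ j ν μ (k + t)) :=
      (measurable_sigmaGE (by rw [Pi.add_apply, htl, hk]; omega) ν).mul
        (measurable_sigmaGE (by rw [Pi.add_apply, Pi.add_apply, htl, hk]; omega) μ)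
    have h := abs_cov_le_phiMix (P := P) hmeas hr hX hY (hL t).1 (hL (k + t)).1 (hL t).2
      (hL (k + t)).2
    have e := integral_lagProd_mul (P := P) hmeas hstat j ν μ 0 k t
    rw [zero_add] at e
    rwa [e, integral_lagProd hmeas hstat, integral_lagProd hmeas hstat, ← sq] at h
  rcases abs_choice (k l) with h | h
  · exact pos k (by omega)
  · have e := integral_lagProd_mul (P := P) hmeas hstat j ν μ (-k) 0 k
    rw [neg_add_cancel, zero_add] at e
    rw [e]
    simp only [mul_comm (lagProd ξ j ν μ (-k) _)]
    exact pos (-k) (by simp only [Pi.neg_apply]; omega)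

end Field

/-! ### Variance and bias of the estimator -/

section Consistency

variable [MeasurableSpace Ω] {q p : ℕ} {P : Measure Ω} [IsProbabilityMeasure P]
  {ξ : (Fin q → ℤ) → Ω → (Fin p → ℝ)}

/-- The variance of a sample autocovariance at a lag inside `[-M, M]^q` is of order
`M ^ q / |Γ̃_n(j)|`, uniformly in the lag. -/
theorem exists_variance_acovHat_le [Nonempty (Fin q)] (hmeas : ∀ i, Measurable (ξ i))
    (hstat : StrictStationary ξ P)
    (hmom : ∀ k, Integrable (fun ω => (ξ 0 ω k) ^ 4) P)
    (hphisum : Summable (fun r : ℕ => (r : ℝ) ^ (q - 1) * Real.sqrt (phiMix ξ P (r : ℤ)))) :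
    ∃ C : ℝ, 0 ≤ C ∧ ∀ M : ℕ, 1 ≤ M → ∀ j : Fin q → ℤ, (∀ l, |j l| ≤ M) →
      ∀ (n : Fin q → ℕ) (ν μ : Fin p), 0 < (boxJ q n j).card →
        ∫ ω, (acovHat ξ n j ω ν μ - acov ξ P j ν μ) ^ 2 ∂P ≤
          C * (M : ℝ) ^ q / (boxJ q n j).card := by
  obtain ⟨C, hC0, hC⟩ := exists_sum_le (fun r : ℕ => Real.sqrt_nonneg (phiMix ξ P (r : ℤ))) hphisum
  set K := ∑ k, ∫ ω, ξ 0 ω k ^ 4 ∂P with hK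
  have hK0 : 0 ≤ K := Finset.sum_nonneg fun k _ => integral_nonneg fun ω => by positivity
  refine ⟨2 * K * C, by positivity, fun M hM j hj n ν μ hN => ?_⟩
  set Z := lagProd ξ j ν μ with hZ
  set γ := acov ξ P j ν μ with hγ
  have hL : ∀ i, MemLp (Z i) 2 P := fun i => (memLp_lagProd hmeas hstat hmom j ν μ i).1
  have hZK : ∀ i, ∫ ω, Z i ω ^ 2 ∂P ≤ K := fun i => (memLp_lagProd hmeas hstat hmom j ν μ i).2
  have hEZ : ∀ i, ∫ ω, Z i ω ∂P = γ := integral_lagProd hmeas hstat j ν μ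
  have hZi : ∀ i, Integrable (Z i) P := fun i => (hL i).integrable (by norm_num)
  have hZZ : ∀ i i', Integrable (fun ω => Z i ω * Z i' ω) P := fun i i' => (hL i).integrable_mul (hL i')
  set h : (Fin q → ℤ) → ℝ := fun k => |∫ ω, Z 0 ω * Z k ω ∂P - γ ^ 2| with hh
  have hγK : γ ^ 2 ≤ K := by
    have h1 := ProbabilityTheory.variance_nonneg (Z 0) P
    rw [ProbabilityTheory.variance_eq_sub (hL 0), hEZ] at h1
    have h2 := hZK 0
    simp only [Pi.pow_apply] at h1
    linarith
  have hhB : ∀ k, h k ≤ 2 * K := by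
    intro k
    have h1 := abs_le.1 (abs_integral_mul_le (hL 0) (hL k) (hZK 0) (hZK k))
    refine abs_le.2 ⟨?_, ?_⟩ <;> nlinarith [sq_nonneg γ]
  have hsum : ∀ F : Finset (Fin q → ℤ), ∑ k ∈ F, h k ≤ 2 * K * (C * (M : ℝ) ^ q) :=
    hC M hM (fun l => (j l).natAbs) (fun l => by have h1 := hj l; rw [Int.abs_eq_natAbs] at h1; omega) (2 * K) (by positivity) h hhB
      fun k l r hr hk => abs_cov_lagProd_le hmeas hstat hmom j k ν μ hr (by rw [hk]; simp)
  set b := boxJ q n j with hb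
  have hN' : (0 : ℝ) < b.card := by exact_mod_cast hN
  have hcov : ∀ i i', ∫ ω, (Z i ω - γ) * (Z i' ω - γ) ∂P ≤ h (i' - i) := by
    intro i i'
    have e : ∀ ω, (Z i ω - γ) * (Z i' ω - γ) = Z i ω * Z i' ω - γ * Z i ω - γ * Z i' ω + γ ^ 2 :=
      fun ω => by ring
    simp_rw [e]
    have i1 : Integrable (fun ω => Z i ω * Z i' ω - γ * Z i ω) P :=
      (hZZ i i').sub ((hZi i).const_mul γ)
    have i2 : Integrable (fun ω => Z i ω * Z i' ω - γ * Z i ω - γ * Z i' ω) P :=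
      i1.sub ((hZi i').const_mul γ)
    rw [integral_add i2 (integrable_const _), integral_sub i1 ((hZi i').const_mul γ),
      integral_sub (hZZ i i') ((hZi i).const_mul γ), integral_const_mul, integral_const_mul,
      hEZ, hEZ]
    have e2 := integral_lagProd_mul (P := P) hmeas hstat j ν μ 0 (i' - i) i
    rw [zero_add, sub_add_cancel] at e2
    refine le_trans (le_of_eq ?_) (le_abs_self _)
    rw [← hZ] at e2
    rw [← e2]
    simp
    ring
  have hint : ∀ i i', Integrable (fun ω => (Z i ω - γ) * (Z i' ω - γ)) P := fun i i' =>
    ((hL i).sub (memLp_const γ)).integrable_mul ((hL i').sub (memLp_const γ))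
  have hpt : ∀ ω, (acovHat ξ n j ω ν μ - γ) ^ 2 =
      ((b.card : ℝ)⁻¹) ^ 2 * ∑ i ∈ b, ∑ i' ∈ b, (Z i ω - γ) * (Z i' ω - γ) := by
    intro ω
    rw [← Finset.sum_mul_sum, ← sq, ← mul_pow, Finset.sum_sub_distrib, mul_sub]
    congr 2
    simp only [sum_const, nsmul_eq_mul]
    rw [inv_mul_cancel_left₀ hN'.ne']
  simp_rw [hpt]
  rw [integral_const_mul, integral_finsetSum _ fun i _ => integrable_finsetSum _ fun i' _ => hint i i']
  simp_rw [integral_finsetSum b fun i' _ => hint _ i']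
  have hrow : ∀ i ∈ b, ∑ i' ∈ b, ∫ ω, (Z i ω - γ) * (Z i' ω - γ) ∂P ≤ 2 * K * (C * (M : ℝ) ^ q) := by
    intro i _
    calc _ ≤ ∑ i' ∈ b, h (i' - i) := Finset.sum_le_sum fun i' _ => hcov i i'
      _ = ∑ k ∈ b.image (fun i' => i' - i), h k :=
        (Finset.sum_image fun x _ y _ hxy => sub_left_injective hxy).symm
      _ ≤ _ := hsum _
  calc _ ≤ ((b.card : ℝ)⁻¹) ^ 2 * ∑ i ∈ b, 2 * K * (C * (M : ℝ) ^ q) := by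
        gcongr with i hi; exact hrow i hi
    _ = _ := by
        simp only [sum_const, nsmul_eq_mul]
        field_simp

theorem memLp_acovHat (hmeas : ∀ i, Measurable (ξ i)) (hstat : StrictStationary ξ P)
    (hmom : ∀ k, Integrable (fun ω => (ξ 0 ω k) ^ 4) P) (n : Fin q → ℕ) (j : Fin q → ℤ)
    (ν μ : Fin p) : MemLp (fun ω => acovHat ξ n j ω ν μ) 2 P :=
  (memLp_finsetSum _ fun i _ => (memLp_lagProd hmeas hstat hmom j ν μ i).1).const_mul _

theorem sigmaHat_apply (w : (Fin q → ℕ) → (Fin q → ℤ) → ℝ) (m n : Fin q → ℕ) (ω : Ω)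
    (ν μ : Fin p) :
    sigmaHat ξ w m n ω ν μ = ∑ j ∈ lags q m, w m j * acovHat ξ n j ω ν μ := by
  simp [sigmaHat, Finset.sum_apply]

theorem memLp_sigmaHat (hmeas : ∀ i, Measurable (ξ i)) (hstat : StrictStationary ξ P)
    (hmom : ∀ k, Integrable (fun ω => (ξ 0 ω k) ^ 4) P) (w : (Fin q → ℕ) → (Fin q → ℤ) → ℝ)
    (m n : Fin q → ℕ) (ν μ : Fin p) : MemLp (fun ω => sigmaHat ξ w m n ω ν μ) 2 P := by
  simp_rw [sigmaHat_apply]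
  exact memLp_finsetSum _ fun j _ => (memLp_acovHat hmeas hstat hmom n j ν μ).const_mul _

theorem card_lags_le {m : Fin q → ℕ} {M : ℕ} (hM : 1 ≤ M) (hm : ∀ l, m l ≤ M) :
    ((lags q m).card : ℝ) ≤ (3 * (M : ℝ)) ^ q := by
  have h : (lags q m).card ≤ (3 * M) ^ q := by
    rw [lags, Pi.card_Icc]
    refine (Finset.prod_le_pow_card _ _ (3 * M) fun l _ => ?_).trans (by simp)
    rw [Int.card_Icc]
    have := hm l
    omega
  exact_mod_cast h

theorem le_card_boxJ {n : Fin q → ℕ} {M N : ℕ} (hN : ∀ l, N ≤ n l) (hMN : 2 * M ≤ N)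
    {j : Fin q → ℤ} (hj : ∀ l, |j l| ≤ M) : ((N : ℝ) / 2) ^ q ≤ (boxJ q n j).card := by
  have hsub : Finset.Icc (fun l => 1 + max 0 (-j l)) (fun l => (n l : ℤ) - max 0 (j l)) ⊆
      boxJ q n j := by
    intro i hi
    rw [Finset.mem_Icc] at hi
    rw [boxJ, Finset.mem_filter, _root_.box, Finset.mem_Icc, Finset.mem_Icc]
    refine ⟨⟨fun l => ?_, fun l => ?_⟩, fun l => ?_, fun l => ?_⟩ <;>
      have h1 := hi.1 l <;> have h2 := hi.2 l <;> simp only [Pi.one_apply, Pi.add_apply] at * <;>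
      omega
  refine le_trans ?_ (Nat.cast_le.2 (Finset.card_le_card hsub))
  rw [Pi.card_Icc, Nat.cast_prod]
  calc ((N : ℝ) / 2) ^ q = ∏ _l : Fin q, ((N : ℝ) / 2) := by rw [prod_const, card_univ, Fintype.card_fin]
    _ ≤ _ := by
      refine Finset.prod_le_prod (fun _ _ => by positivity) fun l _ => ?_
      rw [Int.card_Icc]
      have h1 := hN l
      have h2 := hj l
      have h3 := le_abs_self (j l)
      have h4 := neg_le_abs (j l)
      have h5 : N ≤ 2 * ((n l : ℤ) - max 0 (j l) + 1 - (1 + max 0 (-j l))).toNat := by omega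
      have h6 : (N : ℝ) ≤ 2 * (((n l : ℤ) - max 0 (j l) + 1 - (1 + max 0 (-j l))).toNat : ℝ) := by
        exact_mod_cast h5
      linarith

theorem summable_acov [Nonempty (Fin q)] (hmeas : ∀ i, Measurable (ξ i))
    (hstat : StrictStationary ξ P) (hmean : ∀ k, ∫ ω, ξ 0 ω k ∂P = 0)
    (hmom : ∀ k, Integrable (fun ω => (ξ 0 ω k) ^ 4) P)
    (hphisum : Summable (fun r : ℕ => (r : ℝ) ^ (q - 1) * Real.sqrt (phiMix ξ P (r : ℤ))))
    (ν μ : Fin p) : Summable fun j => |acov ξ P j ν μ| := by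
  obtain ⟨C, hC0, hC⟩ := exists_sum_le (fun r : ℕ => Real.sqrt_nonneg (phiMix ξ P (r : ℤ))) hphisum
  set K := ∑ k, ∫ ω, ξ 0 ω k ^ 2 ∂P with hK
  have hK0 : 0 ≤ K := Finset.sum_nonneg fun k _ => integral_nonneg fun ω => by positivity
  refine summable_of_sum_le (c := 2 * K * (C * ((1 : ℕ) : ℝ) ^ q)) (fun _ => abs_nonneg _)
    (hC 1 le_rfl (fun _ => 0) (fun _ => zero_le_one) (2 * K) (by positivity) _ (fun k => ?_)
      fun k l r hr hk => abs_acov_le hmeas hstat hmom hmean k ν μ hr (by simpa using hk))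
  have hL := memLp_apply hmeas hstat hmom
  have hV := integral_sq_apply_le (P := P) hmeas hstat
  have := abs_integral_mul_le (hL 0 ν) (hL k μ) (hV 0 ν) (hV k μ)
  exact this.trans (by linarith)

/-- `E[(σ̂²_n - E σ̂²_n)²]` is of order `((m^*)³ / n_*) ^ q`: each of the at most `(3 m^*) ^ q` lags
contributes an `L²`-error of order `(m^* / n_*) ^ (q / 2)`. -/
theorem exists_variance_sigmaHat_le [Nonempty (Fin q)] (hmeas : ∀ i, Measurable (ξ i))
    (hstat : StrictStationary ξ P)
    (hmom : ∀ k, Integrable (fun ω => (ξ 0 ω k) ^ 4) P)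
    (hphisum : Summable (fun r : ℕ => (r : ℝ) ^ (q - 1) * Real.sqrt (phiMix ξ P (r : ℤ))))
    (w : (Fin q → ℕ) → (Fin q → ℤ) → ℝ) (hW2 : ∃ C : ℝ, ∀ m j, |w m j| ≤ C) :
    ∃ C : ℝ, ∀ (m n : Fin q → ℕ) (M N : ℕ), 1 ≤ M → (∀ l, m l ≤ M) → (∀ l, N ≤ n l) →
      2 * M ≤ N → ∀ ν μ : Fin p,
      ∫ ω, (sigmaHat ξ w m n ω ν μ - ∑ j ∈ lags q m, w m j * acov ξ P j ν μ) ^ 2 ∂P ≤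
        C * ((M : ℝ) ^ 3 / N) ^ q := by
  obtain ⟨C, hC0, hC⟩ := exists_variance_acovHat_le (P := P) hmeas hstat hmom hphisum
  obtain ⟨Cw, hCw⟩ := hW2
  refine ⟨Cw ^ 2 * C * (3 ^ q) ^ 2 * 2 ^ q, fun m n M N hM hm hN hMN ν μ => ?_⟩
  have hM0 : (0 : ℝ) < M := by exact_mod_cast hM
  have hN0 : (0 : ℝ) < N := by exact_mod_cast (by omega : 0 < N)
  have hjM : ∀ j ∈ lags q m, ∀ l, |j l| ≤ M := by
    intro j hj l
    rw [lags, Finset.mem_Icc] at hj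
    have h1 := hj.1 l
    have h2 := hj.2 l
    have h3 := hm l
    exact abs_le.2 ⟨by simp only at h1; omega, by simp only at h2; omega⟩
  have hL : ∀ j, MemLp (fun ω => acovHat ξ n j ω ν μ - acov ξ P j ν μ) 2 P := fun j =>
    (memLp_acovHat hmeas hstat hmom n j ν μ).sub (memLp_const _)
  set L := lags q m with hLdef
  have hpt : ∀ ω, (sigmaHat ξ w m n ω ν μ - ∑ j ∈ L, w m j * acov ξ P j ν μ) ^ 2 ≤
      L.card * ∑ j ∈ L, Cw ^ 2 * (acovHat ξ n j ω ν μ - acov ξ P j ν μ) ^ 2 := by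
    intro ω
    rw [sigmaHat_apply, ← Finset.sum_sub_distrib]
    refine (sq_sum_le_card_mul_sum_sq).trans ?_
    gcongr with j hj
    rw [← mul_sub, mul_pow]
    gcongr ?_ * _
    rw [← sq_abs]
    have := hCw m j
    gcongr
  have hi : ∀ j ∈ L, Integrable
      (fun ω => Cw ^ 2 * (acovHat ξ n j ω ν μ - acov ξ P j ν μ) ^ 2) P :=
    fun j _ => (hL j).integrable_sq.const_mul _
  have hcard := card_lags_le hM hm
  have hj : ∀ j ∈ L, ∫ ω, Cw ^ 2 * (acovHat ξ n j ω ν μ - acov ξ P j ν μ) ^ 2 ∂P ≤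
      Cw ^ 2 * (C * (M : ℝ) ^ q / ((N : ℝ) / 2) ^ q) := by
    intro j hj
    have h1 := le_card_boxJ hN hMN (hjM j hj)
    have h2 : 0 < ((N : ℝ) / 2) ^ q := by positivity
    rw [integral_const_mul]
    refine mul_le_mul_of_nonneg_left ((hC M hM j (hjM j hj) n ν μ ?_).trans ?_) (sq_nonneg _)
    · exact_mod_cast h2.trans_le h1
    · gcongr
  calc _ ≤ ∫ ω, L.card * ∑ j ∈ L, Cw ^ 2 * (acovHat ξ n j ω ν μ - acov ξ P j ν μ) ^ 2 ∂P :=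
        integral_mono_of_nonneg (ae_of_all _ fun ω => sq_nonneg _)
          ((integrable_finsetSum _ hi).const_mul _) (ae_of_all _ hpt)
    _ ≤ L.card * ∑ j ∈ L, Cw ^ 2 * (C * (M : ℝ) ^ q / ((N : ℝ) / 2) ^ q) := by
        rw [integral_const_mul, integral_finsetSum _ hi]
        gcongr with j hj'
        exact hj j hj'
    _ = (L.card : ℝ) ^ 2 * (Cw ^ 2 * (C * (M : ℝ) ^ q / ((N : ℝ) / 2) ^ q)) := by
        simp only [sum_const, nsmul_eq_mul]; ring
    _ ≤ ((3 * (M : ℝ)) ^ q) ^ 2 * (Cw ^ 2 * (C * (M : ℝ) ^ q / ((N : ℝ) / 2) ^ q)) := by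
        gcongr
    _ = _ := by
        rw [mul_pow 3 (M : ℝ), div_pow, div_pow, ← pow_mul (M : ℝ) 3 q]
        field_simp
        ring

/-- The weighted sums of the autocovariances converge to the asymptotic variance. -/
theorem tendsto_sum_lags {γ : (Fin q → ℤ) → ℝ} (hγ : Summable fun j => |γ j|)
    {w : (Fin q → ℕ) → (Fin q → ℤ) → ℝ}
    (hW1 : ∀ j : Fin q → ℤ, Tendsto (fun m : Fin q → ℕ => w m j) atTop (𝓝 1))
    (hW2 : ∃ C : ℝ, ∀ m j, |w m j| ≤ C) {mseq : (Fin q → ℕ) → (Fin q → ℕ)}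
    (hm1 : Tendsto mseq atTop atTop) :
    Tendsto (fun n => ∑ j ∈ lags q (mseq n), w (mseq n) j * γ j) atTop (𝓝 (∑' j, γ j)) := by
  obtain ⟨C, hC⟩ := hW2
  have h := tendsto_tsum_of_dominated_convergence (𝓕 := atTop)
    (f := fun (n : Fin q → ℕ) j => if j ∈ lags q (mseq n) then w (mseq n) j * γ j else 0)
    (g := γ) (bound := fun j => C * |γ j|) (hγ.mul_left C) (fun j => ?_)
    (Eventually.of_forall fun n j => ?_)
  · refine h.congr fun n => ?_
    rw [tsum_eq_sum (s := lags q (mseq n)) (fun j hj => if_neg hj)]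
    exact Finset.sum_congr rfl fun j hj => if_pos hj
  · have h1 := ((hW1 j).comp hm1).mul_const (γ j)
    rw [one_mul] at h1
    refine h1.congr' ?_
    filter_upwards [hm1.eventually_ge_atTop fun l => (j l).natAbs] with n hn
    rw [if_pos]
    · rfl
    · rw [lags, Finset.mem_Icc]
      constructor <;> intro l <;> have := hn l <;> simp only at this ⊢ <;> omega
  · split_ifs
    · rw [Real.norm_eq_abs, abs_mul]
      exact mul_le_mul_of_nonneg_right (hC _ _) (abs_nonneg _)
    · rw [norm_zero]
      exact mul_nonneg ((abs_nonneg _).trans (hC 0 0)) (abs_nonneg _)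

/-- Entrywise `L²`-consistency, in every dimension `p`. -/
theorem tendsto_integral_sigmaHat_sub_sq [Nonempty (Fin q)] (hmeas : ∀ i, Measurable (ξ i))
    (hstat : StrictStationary ξ P) (hmean : ∀ k, ∫ ω, ξ 0 ω k ∂P = 0)
    (hmom : ∀ k, Integrable (fun ω => (ξ 0 ω k) ^ 4) P)
    (hphisum : Summable (fun r : ℕ => (r : ℝ) ^ (q - 1) * Real.sqrt (phiMix ξ P (r : ℤ))))
    (w : (Fin q → ℕ) → (Fin q → ℤ) → ℝ)
    (hW1 : ∀ j : Fin q → ℤ, Tendsto (fun m : Fin q → ℕ => w m j) atTop (𝓝 1))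
    (hW2 : ∃ C : ℝ, ∀ m j, |w m j| ≤ C)
    (mseq : (Fin q → ℕ) → (Fin q → ℕ))
    (hm1 : Tendsto mseq atTop atTop)
    (hm2 : Tendsto (fun n : Fin q → ℕ =>
      ((⨆ i, mseq n i : ℕ) : ℝ) ^ 3 / ((⨅ i, n i : ℕ) : ℝ)) atTop (𝓝 0)) (ν μ : Fin p) :
    Tendsto (fun n : Fin q → ℕ =>
        ∫ ω, (sigmaHat ξ w (mseq n) n ω ν μ - ∑' j, acov ξ P j ν μ) ^ 2 ∂P)
        atTop (𝓝 0) := by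
  have hq : q ≠ 0 := by
    rintro rfl
    exact (Classical.arbitrary (Fin 0)).elim0
  obtain ⟨C, hC⟩ := exists_variance_sigmaHat_le (P := P) hmeas hstat hmom hphisum w hW2
  have hbias := tendsto_sum_lags (summable_acov hmeas hstat hmean hmom hphisum ν μ) hW1 hW2 hm1
  set β : (Fin q → ℕ) → ℝ := fun n => ∑ j ∈ lags q (mseq n), w (mseq n) j * acov ξ P j ν μ with hβ
  set s := ∑' j, acov ξ P j ν μ with hs
  have hlim : Tendsto (fun n : Fin q → ℕ =>
      2 * (C * (((⨆ i, mseq n i : ℕ) : ℝ) ^ 3 / ((⨅ i, n i : ℕ) : ℝ)) ^ q) + 2 * (β n - s) ^ 2)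
      atTop (𝓝 0) := by
    have h1 := (((hm2.pow q).const_mul C).const_mul 2).add
      (((hbias.sub_const s).pow 2).const_mul 2)
    simpa [hq] using h1
  refine squeeze_zero' (Eventually.of_forall fun n => integral_nonneg fun ω => sq_nonneg _) ?_ hlim
  filter_upwards [hm1.eventually_ge_atTop fun _ => 1, eventually_ge_atTop fun _ => 1,
    hm2.eventually_lt_const (show (0 : ℝ) < 1 / 2 by norm_num)] with n hmn hn hlt
  have hmle : ∀ l, mseq n l ≤ ⨆ i, mseq n i := fun l =>
    le_ciSup (f := fun i => mseq n i) (Set.finite_range _).bddAbove l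
  have hnle : ∀ l, ⨅ i, n i ≤ n l := fun l => ciInf_le (OrderBot.bddBelow _) l
  have hM1 : 1 ≤ ⨆ i, mseq n i := (hmn (Classical.arbitrary _)).trans (hmle _)
  have hN1 : 1 ≤ ⨅ i, n i := le_ciInf fun l => hn l
  set M := ⨆ i, mseq n i with hM
  set N := ⨅ i, n i with hN
  have hMN : 2 * M ≤ N := by
    have h1 : (0 : ℝ) < N := by exact_mod_cast hN1
    rw [div_lt_iff₀ h1] at hlt
    have h2 : 2 * (M : ℝ) ^ 3 ≤ N := by linarith
    have h3 : 2 * M ^ 3 ≤ N := by exact_mod_cast h2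
    have h4 : M ≤ M ^ 3 := Nat.le_self_pow (by norm_num) M
    omega
  have hvar := hC (mseq n) n M N hM1 hmle hnle hMN ν μ
  have hL : MemLp (fun ω => sigmaHat ξ w (mseq n) n ω ν μ - β n) 2 P :=
    (memLp_sigmaHat hmeas hstat hmom w (mseq n) n ν μ).sub (memLp_const _)
  calc ∫ ω, (sigmaHat ξ w (mseq n) n ω ν μ - s) ^ 2 ∂P
      ≤ ∫ ω, (2 * (sigmaHat ξ w (mseq n) n ω ν μ - β n) ^ 2 + 2 * (β n - s) ^ 2) ∂P := by
        refine integral_mono_of_nonneg (ae_of_all _ fun ω => sq_nonneg _)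
          ((hL.integrable_sq.const_mul 2).add (integrable_const _)) (ae_of_all _ fun ω => ?_)
        nlinarith [sq_nonneg (sigmaHat ξ w (mseq n) n ω ν μ - β n - (β n - s))]
    _ = 2 * ∫ ω, (sigmaHat ξ w (mseq n) n ω ν μ - β n) ^ 2 ∂P + 2 * (β n - s) ^ 2 := by
        rw [integral_add (hL.integrable_sq.const_mul 2) (integrable_const _), integral_const_mul]
        simp
    _ ≤ _ := by gcongr

end Consistency

/-- Theorem: `L²`-consistency for `p = 1`, `L¹`-consistency for `p > 1`. -/
theorem sigmaHat_Lp_consistent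
    {q p : ℕ} [Nonempty (Fin q)] (hp : 0 < p)
    [MeasurableSpace Ω] (P : Measure Ω) [IsProbabilityMeasure P]
    (ξ : (Fin q → ℤ) → Ω → (Fin p → ℝ))
    (hmeas : ∀ i, Measurable (ξ i))
    (hstat : StrictStationary ξ P)
    (hmix : Tendsto (fun r : ℕ => phiMix ξ P (r : ℤ)) atTop (𝓝 0))
    (hmean : ∀ k, ∫ ω, ξ 0 ω k ∂P = 0)
    (hmom : ∀ k, Integrable (fun ω => (ξ 0 ω k) ^ 4) P)
    (hphisum : Summable (fun r : ℕ => (r : ℝ) ^ (q - 1) * Real.sqrt (phiMix ξ P (r : ℤ))))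
    (w : (Fin q → ℕ) → (Fin q → ℤ) → ℝ)
    (hW1 : ∀ j : Fin q → ℤ, Tendsto (fun m : Fin q → ℕ => w m j) atTop (𝓝 1))
    (hW2 : ∃ C : ℝ, ∀ m j, |w m j| ≤ C)
    (mseq : (Fin q → ℕ) → (Fin q → ℕ))
    (hm1 : Tendsto mseq atTop atTop)
    (hm2 : Tendsto (fun n : Fin q → ℕ =>
      ((⨆ i, mseq n i : ℕ) : ℝ) ^ 3 / ((⨅ i, n i : ℕ) : ℝ)) atTop (𝓝 0)) :
    (p = 1 → ∀ ν μ : Fin p,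
      Tendsto (fun n : Fin q → ℕ =>
        ∫ ω, (sigmaHat ξ w (mseq n) n ω ν μ - (∑' j : Fin q → ℤ, acov ξ P j) ν μ) ^ 2 ∂P)
        atTop (𝓝 0)) ∧
    (1 < p →
      Tendsto (fun n : Fin q → ℕ =>
        ∫ ω, ‖sigmaHat ξ w (mseq n) n ω - (∑' j : Fin q → ℤ, acov ξ P j)‖ ∂P)
        atTop (𝓝 0)) := by
  have hsum := fun ν μ => (summable_acov hmeas hstat hmean hmom hphisum ν μ).of_abs
  have hsum1 : ∀ ν, Summable fun j => acov ξ P j ν := fun ν => Pi.summable.2 fun μ => hsum ν μ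
  have hsum2 : Summable fun j => acov ξ P j := Pi.summable.2 hsum1
  have hσ : ∀ ν μ, (∑' j : Fin q → ℤ, acov ξ P j) ν μ = ∑' j, acov ξ P j ν μ := fun ν μ => by
    rw [tsum_apply hsum2, tsum_apply (hsum1 ν)]
  have main := fun ν μ => tendsto_integral_sigmaHat_sub_sq hmeas hstat hmean hmom hphisum w hW1 hW2
    mseq hm1 hm2 ν μ
  simp_rw [← hσ] at main
  refine ⟨fun _ => main, fun _ => ?_⟩
  set σ := ∑' j : Fin q → ℤ, acov ξ P j with hσdef
  have hlim : Tendsto (fun n : Fin q → ℕ =>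
      ∑ ν, ∑ μ, √(∫ ω, (sigmaHat ξ w (mseq n) n ω ν μ - σ ν μ) ^ 2 ∂P)) atTop (𝓝 0) := by
    have h := tendsto_finsetSum univ fun ν _ => tendsto_finsetSum univ fun μ _ =>
      (main ν μ).sqrt
    simpa using h
  refine squeeze_zero (fun n => integral_nonneg fun ω => norm_nonneg _) (fun n => ?_) hlim
  have hL : ∀ ν μ, MemLp (fun ω => sigmaHat ξ w (mseq n) n ω ν μ - σ ν μ) 2 P := fun ν μ =>
    (memLp_sigmaHat hmeas hstat hmom w (mseq n) n ν μ).sub (memLp_const _)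
  have hi : ∀ ν μ, Integrable (fun ω => |sigmaHat ξ w (mseq n) n ω ν μ - σ ν μ|) P := fun ν μ =>
    ((hL ν μ).integrable (by norm_num)).abs
  -- the entrywise maximum is at most the sum of the entries
  have hpt : ∀ ω, ‖sigmaHat ξ w (mseq n) n ω - σ‖ ≤
      ∑ ν, ∑ μ, |sigmaHat ξ w (mseq n) n ω ν μ - σ ν μ| := by
    intro ω
    have h0 : ∀ ν μ, 0 ≤ |sigmaHat ξ w (mseq n) n ω ν μ - σ ν μ| := fun _ _ => abs_nonneg _
    have h1 : ∀ ν, 0 ≤ ∑ μ, |sigmaHat ξ w (mseq n) n ω ν μ - σ ν μ| := fun ν =>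
      Finset.sum_nonneg fun μ _ => h0 ν μ
    refine (pi_norm_le_iff_of_nonneg (Finset.sum_nonneg fun ν _ => h1 ν)).2 fun ν => ?_
    refine (pi_norm_le_iff_of_nonneg (Finset.sum_nonneg fun ν _ => h1 ν)).2 fun μ => ?_
    exact (Finset.single_le_sum (fun μ _ => h0 ν μ) (mem_univ μ)).trans
      (Finset.single_le_sum (fun ν _ => h1 ν) (mem_univ ν))
  calc _ ≤ ∫ ω, ∑ ν, ∑ μ, |sigmaHat ξ w (mseq n) n ω ν μ - σ ν μ| ∂P :=
        integral_mono_of_nonneg (ae_of_all _ fun ω => norm_nonneg _)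
          (integrable_finsetSum _ fun ν _ => integrable_finsetSum _ fun μ _ => hi ν μ)
          (ae_of_all _ hpt)
    _ = ∑ ν, ∑ μ, ∫ ω, |sigmaHat ξ w (mseq n) n ω ν μ - σ ν μ| ∂P := by
        rw [integral_finsetSum _ fun ν _ => integrable_finsetSum _ fun μ _ => hi ν μ]
        exact Finset.sum_congr rfl fun ν _ => integral_finsetSum _ fun μ _ => hi ν μ
    _ ≤ _ := by
        refine Finset.sum_le_sum fun ν _ => Finset.sum_le_sum fun μ _ => ?_
        have h := integral_mul_le_sqrt (P := P)
          (fun ω => abs_nonneg (sigmaHat ξ w (mseq n) n ω ν μ - σ ν μ))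
          (fun _ => zero_le_one) (hL ν μ).abs (memLp_const 1)
        simpa using h

end
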